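/- Let s be an integer and let a, z > 0 be real numbers with a ≠ 1 and z ≠ 1. Then f_q(z, a q^{s}) tends to ((1 − z a)/((z − 1)(1 − a))) · z^{−s} as q tends to 0 from the right (q ranging over (0,1)). -/

import Mathlib

open Filter Topology

/-- The q-theta function
`θ_q(x) = (x^{1/2} - x^{-1/2}) ∏_{i=1}^∞ (1 - x q^i)(1 - x⁻¹ q^i)`. -/
noncomputable def qTheta (q x : ℝ) : ℝ :=
  (Real.sqrt x - (Real.sqrt x)⁻¹) *
    ∏' i : ℕ, (1 - x * q ^ (i + 1)) * (1 - x⁻¹ * q ^ (i + 1))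

/-- `f_q(z, a) = θ_q(a z) / (θ_q(a) θ_q(z))`. -/
noncomputable def fTheta (q z a : ℝ) : ℝ :=
  qTheta q (a * z) / (qTheta q a * qTheta q z)

noncomputable def qF (q x : ℝ) : ℝ := ∏' i : ℕ, (1 + -(x * q ^ i))

lemma qF_mult {q : ℝ} (hq : q ∈ Set.Ioo (0:ℝ) 1) (x : ℝ) :
    Multipliable (fun i : ℕ => 1 + -(x * q ^ i)) := by
  apply multipliable_one_add_of_summable
  have : Summable (fun i : ℕ => |x| * q ^ i) :=
    (summable_geometric_of_lt_one hq.1.le hq.2).mul_left _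
  refine this.congr (fun i => ?_)
  rw [norm_neg, norm_mul, norm_pow, Real.norm_eq_abs, Real.norm_eq_abs, abs_of_pos hq.1]

lemma qF_step {q : ℝ} (hq : q ∈ Set.Ioo (0:ℝ) 1) (x : ℝ) :
    qF q x = (1 - x) * qF q (q * x) := by
  unfold qF
  have e : (fun i : ℕ => 1 + -(x * q ^ (i+1))) = fun i : ℕ => 1 + -((q * x) * q ^ i) := by
    funext i; ring
  rw [tprod_eq_zero_mul' (by rw [e]; exact qF_mult hq _), e]
  simp [sub_eq_add_neg]

lemma qTheta_eq {q : ℝ} (hq : q ∈ Set.Ioo (0:ℝ) 1) (x : ℝ) :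
    qTheta q x = (Real.sqrt x - (Real.sqrt x)⁻¹) * (qF q (q * x) * qF q (q * x⁻¹)) := by
  unfold qTheta qF
  rw [← (qF_mult hq _).tprod_mul (qF_mult hq _)]
  congr 1
  apply tprod_congr
  intro i
  ring

lemma qTheta_step {q : ℝ} (hq : q ∈ Set.Ioo (0:ℝ) 1) {x : ℝ} (hx : 0 < x) :
    qTheta q (q * x) = -(Real.sqrt q)⁻¹ * x⁻¹ * qTheta q x := by
  have hq0 := hq.1
  rw [qTheta_eq hq, qTheta_eq hq, qF_step hq (q * x)]
  have e : q * (q * x)⁻¹ = x⁻¹ := by field_simp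
  rw [e, qF_step hq x⁻¹, Real.sqrt_mul hq0.le]
  generalize qF q (q * (q * x)) = A
  generalize qF q (q * x⁻¹) = B
  obtain ⟨u, hu, rfl⟩ : ∃ u, 0 < u ∧ x = u ^ 2 := ⟨√x, by positivity, by rw [Real.sq_sqrt hx.le]⟩
  obtain ⟨v, hv, rfl⟩ : ∃ v, 0 < v ∧ q = v ^ 2 := ⟨√q, by positivity, by rw [Real.sq_sqrt hq0.le]⟩
  rw [Real.sqrt_sq hu.le, Real.sqrt_sq hv.le]
  field_simp
  ring

lemma fTheta_step {q : ℝ} (hq : q ∈ Set.Ioo (0:ℝ) 1) {a z : ℝ} (ha : 0 < a) (hz : 0 < z) :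
    fTheta q z (q * a) = z⁻¹ * fTheta q z a := by
  unfold fTheta
  rw [mul_assoc q a z, qTheta_step hq ha, qTheta_step hq (mul_pos ha hz)]
  have h : -(Real.sqrt q)⁻¹ * a⁻¹ ≠ 0 := by
    have := Real.sqrt_pos.2 hq.1
    have : 0 < (Real.sqrt q)⁻¹ * a⁻¹ := by positivity
    rw [neg_mul]; exact neg_ne_zero.2 this.ne'
  rw [show -(Real.sqrt q)⁻¹ * (a * z)⁻¹ * qTheta q (a * z)
      = (-(Real.sqrt q)⁻¹ * a⁻¹) * (z⁻¹ * qTheta q (a * z)) by rw [mul_inv]; ring,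
    mul_assoc _ (qTheta q a), mul_div_mul_left _ _ h, mul_div_assoc]

lemma fTheta_zpow {q : ℝ} (hq : q ∈ Set.Ioo (0:ℝ) 1) {a z : ℝ} (ha : 0 < a) (hz : 0 < z) (s : ℤ) :
    fTheta q z (a * q ^ s) = fTheta q z a * z ^ (-s) := by
  have hq0 := hq.1
  have key : ∀ t : ℤ, fTheta q z (a * q ^ (t+1)) = z⁻¹ * fTheta q z (a * q ^ t) := by
    intro t
    rw [← fTheta_step hq (by positivity) hz, zpow_add_one₀ hq0.ne']
    congr 1; ring
  induction s using Int.induction_on with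
  | zero => simp
  | succ n ih =>
    rw [key, ih, neg_add, zpow_add₀ hz.ne', zpow_neg_one]; ring
  | pred n ih =>
    have := key (-(n:ℤ) - 1)
    rw [sub_add_cancel, ih] at this
    rw [show -(-(n:ℤ) - 1) = -(-(n:ℤ)) + 1 by ring, zpow_add_one₀ hz.ne', ← mul_assoc, this]
    field_simp

lemma qF_tendsto (x : ℝ) :
    Tendsto (fun q : ℝ => qF q (q * x)) (𝓝[Set.Ioo (0:ℝ) 1] 0) (𝓝 1) := by
  have h := tendsto_tprod_one_add_of_dominated_convergence (𝓕 := 𝓝[Set.Ioo (0:ℝ) 1] 0)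
    (f := fun (q : ℝ) (i : ℕ) => -((q * x) * q ^ i)) (g := fun _ => 0)
    (bound := fun i : ℕ => |x| * (1/2 : ℝ) ^ i) ?_ ?_ ?_
  · simpa [qF] using h
  · exact (summable_geometric_of_lt_one (by norm_num) (by norm_num)).mul_left _
  · intro i
    have : Continuous (fun q : ℝ => -((q * x) * q ^ i)) := by fun_prop
    have h2 := this.tendsto 0
    simp only [zero_mul, neg_zero] at h2
    exact h2.mono_left nhdsWithin_le_nhds
  · have h1 : ∀ᶠ q : ℝ in 𝓝[Set.Ioo (0:ℝ) 1] 0, q < 1/2 :=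
      nhdsWithin_le_nhds (Iio_mem_nhds (by norm_num))
    filter_upwards [h1, self_mem_nhdsWithin] with q hq hq' i
    rw [norm_neg, norm_mul, norm_mul, norm_pow, Real.norm_eq_abs, Real.norm_eq_abs,
      abs_of_pos hq'.1]
    have h3 : q ^ i ≤ (1/2:ℝ) ^ i := pow_le_pow_left₀ hq'.1.le hq.le i
    have h4 : q * |x| ≤ |x| := mul_le_of_le_one_left (abs_nonneg x) hq'.2.le
    have := pow_nonneg hq'.1.le i
    exact mul_le_mul h4 h3 this (abs_nonneg x)

lemma qTheta_tendsto (x : ℝ) :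
    Tendsto (fun q : ℝ => qTheta q x) (𝓝[Set.Ioo (0:ℝ) 1] 0)
      (𝓝 (Real.sqrt x - (Real.sqrt x)⁻¹)) := by
  have h := ((qF_tendsto x).mul (qF_tendsto x⁻¹)).const_mul (Real.sqrt x - (Real.sqrt x)⁻¹)
  rw [mul_one, mul_one] at h
  refine h.congr' ?_
  filter_upwards [self_mem_nhdsWithin] with q hq
  rw [qTheta_eq hq]

/-- For an integer `s` and reals `a, z > 0` with `a ≠ 1` and `z ≠ 1`,
`f_q(z, a q^s) → ((1 - z a)/((z - 1)(1 - a))) z^{-s}` as `q → 0⁺`,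
with `q` ranging over `(0,1)`. -/
theorem fTheta_limit_integral_kahler (s : ℤ) (a z : ℝ) (ha : 0 < a) (hz : 0 < z)
    (ha1 : a ≠ 1) (hz1 : z ≠ 1) :
    Tendsto (fun q : ℝ => fTheta q z (a * q ^ s))
      (𝓝[Set.Ioo (0:ℝ) 1] 0)
      (𝓝 ((1 - z * a) / ((z - 1) * (1 - a)) * z ^ (-s))) := by
  have hne : ∀ x : ℝ, 0 < x → x ≠ 1 → Real.sqrt x - (Real.sqrt x)⁻¹ ≠ 0 := by
    intro x hx hx1 h
    apply hx1
    have h0 := Real.sqrt_pos.2 hx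
    have h1 := Real.mul_self_sqrt hx.le
    rw [sub_eq_zero] at h
    rw [← h1]
    nth_rewrite 2 [h]
    exact mul_inv_cancel₀ h0.ne'
  have h := ((qTheta_tendsto (a * z)).div ((qTheta_tendsto a).mul (qTheta_tendsto z))
    (mul_ne_zero (hne a ha ha1) (hne z hz hz1))).mul_const (z ^ (-s))
  have e : (Real.sqrt (a * z) - (Real.sqrt (a * z))⁻¹) /
      ((Real.sqrt a - (Real.sqrt a)⁻¹) * (Real.sqrt z - (Real.sqrt z)⁻¹))
      = (1 - z * a) / ((z - 1) * (1 - a)) := by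
    have hA := hne a ha ha1
    have hZ := hne z hz hz1
    rw [div_eq_div_iff (mul_ne_zero hA hZ)
      (mul_ne_zero (sub_ne_zero.2 hz1) (sub_ne_zero.2 ha1.symm)), Real.sqrt_mul ha.le]
    clear h hA hZ hne
    obtain ⟨u, hu, rfl⟩ : ∃ u, 0 < u ∧ a = u ^ 2 :=
      ⟨√a, by positivity, by rw [Real.sq_sqrt ha.le]⟩
    obtain ⟨v, hv, rfl⟩ : ∃ v, 0 < v ∧ z = v ^ 2 :=
      ⟨√z, by positivity, by rw [Real.sq_sqrt hz.le]⟩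
    rw [Real.sqrt_sq hu.le, Real.sqrt_sq hv.le]
    field_simp
    ring
  rw [e] at h
  refine h.congr' ?_
  filter_upwards [self_mem_nhdsWithin] with q hq
  rw [fTheta_zpow hq ha hz]
  rfl
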